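/- arXiv:2310.03383 — 3 statements merged into one kernel-verified Lean document; each statement's English description precedes it below -/
import Mathlib

section
/- Fix a positive integer m and let P_m denote the set of polynomial maps ℝⁿ → ℝⁿ of total degree at most m. Let Ω̃ = Ω ∩ P_m be the set of homeomorphisms Γ_{x₀} → Γ_{y₀} that are restrictions of polynomials in P_m. Assume Ω̃ is nonempty and closed in the topology of uniform convergence on Γ_{x₀}, and that J is lower semicontinuous with respect to this topology. Then the functional J attains its minimum on Ω̃: there exists K₀ ∈ Ω̃ with J[K₀] = inf_{K∈Ω̃} J[K]. -/
/-!
Every `K ∈ Ω ∩ P` takes values in the compact trajectory `Γy`, so `Ω ∩ P` is bounded in the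
uniform norm. It also lies in the space of restrictions of polynomial maps of degree at most `m`,
which is finite-dimensional (`finiteDimensional_polyMaps`). A closed bounded set inside a
finite-dimensional subspace is compact (`isCompact_of_subset_finiteDimensional`), and a lower
semicontinuous function attains its minimum on a nonempty compact set.
-/

open MeasureTheory Set Filter BoundedContinuousFunction

/-- The space of bounded continuous functions on `Γ` that are restrictions of polynomial maps
of total degree at most `m`. -/
def polyMaps {n : ℕ} (Γ : Set (EuclideanSpace ℝ (Fin n))) (m : ℕ) :
    Submodule ℝ (↥Γ →ᵇ EuclideanSpace ℝ (Fin n)) where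
  carrier := {K | ∃ p : Fin n → MvPolynomial (Fin n) ℝ,
      (∀ i, (p i).totalDegree ≤ m) ∧
      ∀ q : ↥Γ, ∀ i : Fin n,
        K q i = MvPolynomial.eval (fun j => (q : EuclideanSpace ℝ (Fin n)) j) (p i)}
  zero_mem' := ⟨0, by simp, by simp⟩
  add_mem' := by
    rintro K L ⟨p, hp, hK⟩ ⟨r, hr, hL⟩
    exact ⟨p + r, fun i => (MvPolynomial.totalDegree_add _ _).trans (max_le (hp i) (hr i)),
      fun q i => by simp [hK, hL]⟩
  smul_mem' := by
    rintro c K ⟨p, hp, hK⟩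
    exact ⟨c • p, fun i => (MvPolynomial.totalDegree_smul_le _ _).trans (hp i),
      fun q i => by simp [hK]⟩

theorem finiteDimensional_polyMaps {n : ℕ} (Γ : Set (EuclideanSpace ℝ (Fin n))) (m : ℕ) :
    FiniteDimensional ℝ (polyMaps Γ m) := by
  -- Compare both spaces inside the space of all functions `Γ → Fin n → ℝ`: no topology is needed
  -- there, so polynomials can be evaluated without knowing that they are bounded on `Γ`.
  let ev : (Fin n → MvPolynomial.restrictTotalDegree (Fin n) ℝ m) →ₗ[ℝ] (↥Γ → Fin n → ℝ) :=
    { toFun := fun p q i =>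
        MvPolynomial.eval (fun j => (q : EuclideanSpace ℝ (Fin n)) j) (p i).1
      map_add' := fun p r => by ext; simp
      map_smul' := fun c p => by ext; simp }
  let ι : polyMaps Γ m →ₗ[ℝ] (↥Γ → Fin n → ℝ) :=
    { toFun := fun K q i => K.1 q i
      map_add' := fun K L => by ext; simp
      map_smul' := fun c K => by ext; simp }
  have hι : ∀ K, ι K ∈ LinearMap.range ev := by
    rintro ⟨K, p, hp, hK⟩
    refine ⟨fun i => ⟨p i, (MvPolynomial.mem_restrictTotalDegree _ _ _).2 (hp i)⟩, ?_⟩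
    ext q i
    exact (hK q i).symm
  refine Module.Finite.of_injective (ι.codRestrict (LinearMap.range ev) hι) fun K L h => ?_
  ext q i
  exact congrFun (congrFun (congrArg Subtype.val h) q) i

theorem isCompact_of_subset_finiteDimensional {V : Type*} [NormedAddCommGroup V]
    [NormedSpace ℝ V] (S : Submodule ℝ V) [FiniteDimensional ℝ S] {A : Set V}
    (hAS : A ⊆ S) (hA : IsClosed A) (hb : Bornology.IsBounded A) : IsCompact A := by
  have : ProperSpace S := FiniteDimensional.proper ℝ S
  have hc : IsCompact ((↑) ⁻¹' A : Set S) := by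
    refine Metric.isCompact_of_isClosed_isBounded (hA.preimage continuous_subtype_val) ?_
    exact Bornology.isBounded_image_subtype_val.1 (hb.subset (Set.image_preimage_subset _ _))
  have h := hc.image continuous_subtype_val
  rwa [Set.image_preimage_eq_of_subset (by simpa using hAS)] at h

/-- The cost functional attains its minimum on the (nonempty, closed)
set `Ω̃ = Ω ∩ P_m` of homeomorphisms between the trajectories that are restrictions of
polynomial maps of total degree at most `m`. -/
theorem statement3
    (n : ℕ) (T : ℝ) (hT : 0 < T) (m : ℕ) (hm : 0 < m)
    (f g : ℝ → EuclideanSpace ℝ (Fin n) → EuclideanSpace ℝ (Fin n))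
    (hft : ∀ z, Continuous fun t => f t z) (hfx : ∀ t, LocallyLipschitz (f t))
    (hgt : ∀ z, Continuous fun t => g t z) (hgx : ∀ t, LocallyLipschitz (g t))
    (x₀ y₀ : EuclideanSpace ℝ (Fin n))
    (x : ℝ → EuclideanSpace ℝ (Fin n)) (hx0 : x 0 = x₀)
    (hx : ∀ t ∈ Set.Icc (0:ℝ) T, HasDerivAt x (f t (x t)) t)
    (y : ℝ → EuclideanSpace ℝ (Fin n) → EuclideanSpace ℝ (Fin n))
    (hy0 : ∀ z, y 0 z = z)
    (hy : ∀ z, ∀ t ∈ Set.Icc (0:ℝ) T, HasDerivAt (fun s => y s z) (g t (y t z)) t)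
    (Γx Γy : Set (EuclideanSpace ℝ (Fin n)))
    (hΓx : Γx = x '' Set.Icc 0 T) (hΓy : Γy = (fun t => y t y₀) '' Set.Icc 0 T)
    (hx₀Γ : x₀ ∈ Γx)
    (Ω : Set (↥Γx →ᵇ EuclideanSpace ℝ (Fin n)))
    (hΩ : Ω = {K | ∃ e : ↥Γx ≃ₜ ↥Γy, ∀ p : ↥Γx, (e p : EuclideanSpace ℝ (Fin n)) = K p})
    -- `P_m`: restrictions to `Γ_{x₀}` of polynomial maps of total degree at most `m`
    (P : Set (↥Γx →ᵇ EuclideanSpace ℝ (Fin n)))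
    (hP : P = {K | ∃ p : Fin n → MvPolynomial (Fin n) ℝ,
      (∀ i, (p i).totalDegree ≤ m) ∧
      ∀ q : ↥Γx, ∀ i : Fin n,
        K q i = MvPolynomial.eval (fun j => (q : EuclideanSpace ℝ (Fin n)) j) (p i)})
    (hne : (Ω ∩ P).Nonempty) (hclosed : IsClosed (Ω ∩ P))
    (J : (↥Γx →ᵇ EuclideanSpace ℝ (Fin n)) → ℝ)
    (hJ : ∀ K, J K = (1 / T) * ∫ t in (0:ℝ)..T,
      ‖K ⟨x (Set.projIcc 0 T hT.le t),
           by rw [hΓx]; exact Set.mem_image_of_mem x (Set.projIcc 0 T hT.le t).2⟩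
        - y t (K ⟨x₀, hx₀Γ⟩)‖ ^ 2)
    (hJlsc : LowerSemicontinuousOn J (Ω ∩ P)) :
    ∃ K₀ ∈ Ω ∩ P, (∀ K ∈ Ω ∩ P, J K₀ ≤ J K) ∧ J K₀ = sInf (J '' (Ω ∩ P)) := by
  have hΓyc : IsCompact Γy := by
    rw [hΓy]
    exact isCompact_Icc.image_of_continuousOn
      fun t ht => (hy y₀ t ht).continuousAt.continuousWithinAt
  obtain ⟨C, hC⟩ := hΓyc.isBounded.exists_norm_le
  have hbdd : Bornology.IsBounded (Ω ∩ P) := by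
    refine isBounded_iff_forall_norm_le.2 ⟨C, fun K hK => ?_⟩
    have hKΩ := hK.1
    rw [hΩ] at hKΩ
    obtain ⟨e, he⟩ := hKΩ
    have : Nonempty ↥Γx := ⟨⟨x₀, hx₀Γ⟩⟩
    refine BoundedContinuousFunction.norm_le_of_nonempty.2 fun p => ?_
    rw [← he p]
    exact hC _ (e p).2
  have := finiteDimensional_polyMaps Γx m
  have hcomp : IsCompact (Ω ∩ P) := by
    refine isCompact_of_subset_finiteDimensional (polyMaps Γx m) (fun K hK => ?_) hclosed hbdd
    have hKP := hK.2
    rw [hP] at hKP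
    exact hKP
  obtain ⟨K₀, hK₀, hmin⟩ := hJlsc.exists_isMinOn hne hcomp
  have hle : ∀ K ∈ Ω ∩ P, J K₀ ≤ J K := fun K hK => hmin hK
  refine ⟨K₀, hK₀, hle, (IsLeast.csInf_eq ⟨Set.mem_image_of_mem J hK₀, ?_⟩).symm⟩
  rintro _ ⟨K, hK, rfl⟩
  exact hle K hK
end

section
/- Assume in addition that x(t,x₀) ≠ 0 and y(t,y₀) ≠ 0 for every t ∈ [0,T] (as can always be arranged by augmenting the systems with the time variable). Then there exists a continuous map K₀ : [0,T] → GL(n,ℝ) (each K₀(t) an invertible n×n real matrix) such that K₀(t)·x(t,x₀) = y(t,y₀) for every t ∈ [0,T]; in particular K₀(0)x₀ = y₀ and J₁[K₀] := (1/T)∫₀ᵀ ‖K₀(t)x(t,x₀) − y(t,K₀(0)x₀)‖² dt = 0. -/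
/-!
A nonvanishing continuous curve `x` on `[0,T]` lifts to a continuous curve `A` of invertible
matrices with `A(t) x(0) = x(t)` (`exists_lift`). Lifting both curves to `A` and `B`, and choosing
one invertible `M` with `M x₀ = y₀` (`exists_isUnit_mulVec_eq`), the family `K₀ = B M A⁻¹` works.

The lift is built from the rank-one perturbations `transfer a b = 1 + (b - a) aᵀ / (a ⬝ a)` of the
identity. Such a matrix sends `a` to `b`, and its determinant is `(a ⬝ b) / (a ⬝ a)`, so it is
invertible once `a ⬝ b ≠ 0`. By uniform continuity there is a step `h` such that `x(s) ⬝ x(t) ≠ 0`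
whenever `|s - t| ≤ h`. The telescoping product of the matrices
`transfer (x (min t (k h))) (x (min t ((k + 1) h)))` over `k < N`, where `N h ≥ T`, is then
continuous and invertible, and it sends `x(0)` to `x(t)`; stopping the times at `t` makes gluing
over a partition of `[0,T]` unnecessary.
-/

open MeasureTheory Set Filter
open scoped Matrix

section Lifting

variable {n : ℕ}

/-- The rank-one perturbation of the identity `1 + (b - a) aᵀ / (a ⬝ a)`, which sends `a ≠ 0`
to `b` and fixes the orthogonal complement of `a`. -/
noncomputable def transfer (a b : Fin n → ℝ) : Matrix (Fin n) (Fin n) ℝ :=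
  1 + Matrix.vecMulVec (b - a) ((a ⬝ᵥ a)⁻¹ • a)

lemma transfer_mulVec {a : Fin n → ℝ} (ha : a ≠ 0) (b : Fin n → ℝ) :
    transfer a b *ᵥ a = b := by
  have h : a ⬝ᵥ a ≠ 0 := by simpa using ha
  rw [transfer, Matrix.add_mulVec, Matrix.one_mulVec, Matrix.vecMulVec_mulVec, smul_dotProduct,
    smul_eq_mul, inv_mul_cancel₀ h]
  simp

lemma isUnit_transfer {a b : Fin n → ℝ} (hab : a ⬝ᵥ b ≠ 0) : IsUnit (transfer a b) := by
  have ha : a ≠ 0 := by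
    rintro rfl
    simp at hab
  have h : a ⬝ᵥ a ≠ 0 := by simpa using ha
  rw [Matrix.isUnit_iff_isUnit_det, isUnit_iff_ne_zero, transfer, Matrix.vecMulVec_eq Unit,
    Matrix.det_one_add_replicateCol_mul_replicateRow]
  simp only [smul_dotProduct, dotProduct_sub, smul_eq_mul]
  field_simp
  simpa using And.intro hab ha

lemma continuousOn_transfer {s : Set ℝ} {a b : ℝ → Fin n → ℝ} (ha : ContinuousOn a s)
    (hb : ContinuousOn b s) (h0 : ∀ t ∈ s, a t ≠ 0) :
    ContinuousOn (fun t => transfer (a t) (b t)) s := by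
  have hd : ContinuousOn (fun t => (a t ⬝ᵥ a t)⁻¹) s := by
    refine ContinuousOn.inv₀ ?_ fun t ht => by simpa using h0 t ht
    simp only [dotProduct]
    fun_prop
  have hs : ContinuousOn (fun t => (a t ⬝ᵥ a t)⁻¹ • a t) s := hd.smul ha
  refine continuousOn_const.add ?_
  refine continuousOn_pi.2 fun i => continuousOn_pi.2 fun j => ?_
  exact (continuousOn_pi.1 (hb.sub ha) i).mul (continuousOn_pi.1 hs j)

/-- `GL(n, ℝ)` acts transitively on nonzero vectors. -/
lemma exists_isUnit_mulVec_eq {a b : Fin n → ℝ} (ha : a ≠ 0) (hb : b ≠ 0) :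
    ∃ M : Matrix (Fin n) (Fin n) ℝ, IsUnit M ∧ M *ᵥ a = b := by
  by_cases hab : a ⬝ᵥ b = 0
  · -- Orthogonal vectors are joined through `a + b`, which is orthogonal to neither of them.
    have h1 : a ⬝ᵥ (a + b) ≠ 0 := by simpa [dotProduct_add, hab] using ha
    have h2 : (a + b) ⬝ᵥ b ≠ 0 := by simpa [add_dotProduct, hab] using hb
    have h3 : a + b ≠ 0 := by
      intro h
      simp [h] at h1
    refine ⟨transfer (a + b) b * transfer a (a + b),
      (isUnit_transfer h2).mul (isUnit_transfer h1), ?_⟩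
    rw [← Matrix.mulVec_mulVec, transfer_mulVec ha, transfer_mulVec h3]
  · exact ⟨transfer a b, isUnit_transfer hab, transfer_mulVec ha b⟩

/-- Uniform continuity, together with the positive lower bound of `‖x‖` on `[0,T]`, gives a time
scale on which `x` does not turn by a right angle. -/
lemma exists_step {T : ℝ} (hT : 0 < T) {x : ℝ → EuclideanSpace ℝ (Fin n)}
    (hx : ContinuousOn x (Icc 0 T)) (h0 : ∀ t ∈ Icc (0 : ℝ) T, x t ≠ 0) :
    ∃ h > 0, ∀ s ∈ Icc (0 : ℝ) T, ∀ t ∈ Icc (0 : ℝ) T, |s - t| ≤ h →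
      (x s).ofLp ⬝ᵥ (x t).ofLp ≠ 0 := by
  obtain ⟨r, hr, hmin⟩ := isCompact_Icc.exists_isMinOn (nonempty_Icc.2 hT.le) hx.norm
  have hm : 0 < ‖x r‖ := norm_pos_iff.2 (h0 r hr)
  obtain ⟨δ, hδ, H⟩ := Metric.uniformContinuousOn_iff.1
    (isCompact_Icc.uniformContinuousOn_of_continuous hx) _ hm
  refine ⟨δ / 2, by positivity, fun s hs t ht hst hz => ?_⟩
  have h1 := H s hs t ht (by rw [Real.dist_eq]; linarith)
  have h2 : ‖x r‖ ≤ ‖x s‖ := hmin hs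
  have h3 : inner ℝ (x s) (x t) = 0 := by
    rw [EuclideanSpace.inner_eq_star_dotProduct, star_trivial, dotProduct_comm, hz]
  have h4 := norm_sub_sq_real (x s) (x t)
  rw [h3] at h4
  rw [dist_eq_norm] at h1
  nlinarith [norm_nonneg (x s - x t), sq_nonneg ‖x t‖]

/-- A nonvanishing continuous curve lifts through the orbit map `A ↦ A (x 0)` to a continuous
curve of invertible matrices. -/
lemma exists_lift {T : ℝ} (hT : 0 < T) {x : ℝ → EuclideanSpace ℝ (Fin n)}
    (hx : ContinuousOn x (Icc 0 T)) (h0 : ∀ t ∈ Icc (0 : ℝ) T, x t ≠ 0) :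
    ∃ A : ℝ → Matrix (Fin n) (Fin n) ℝ, ContinuousOn A (Icc 0 T) ∧
      (∀ t ∈ Icc (0 : ℝ) T, IsUnit (A t)) ∧
      ∀ t ∈ Icc (0 : ℝ) T, A t *ᵥ (x 0).ofLp = (x t).ofLp := by
  obtain ⟨h, hh, hstep⟩ := exists_step hT hx h0
  have hmem : ∀ k : ℕ, ∀ t ∈ Icc (0 : ℝ) T, min t (k * h) ∈ Icc (0 : ℝ) T := fun k t ht =>
    ⟨le_min ht.1 (by positivity), (min_le_left _ _).trans ht.2⟩
  have hne : ∀ t ∈ Icc (0 : ℝ) T, (x t).ofLp ≠ 0 := fun t ht => by simpa using h0 t ht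
  have hcont : ∀ k : ℕ, ContinuousOn (fun t => (x (min t (k * h))).ofLp) (Icc 0 T) := fun k =>
    (PiLp.continuous_ofLp 2 _).comp_continuousOn
      (hx.comp (by fun_prop) fun t ht => hmem k t ht)
  -- After `k` factors the product reaches the curve at the stopped time `min t (k h)`.
  have key : ∀ k : ℕ, ∃ A : ℝ → Matrix (Fin n) (Fin n) ℝ, ContinuousOn A (Icc 0 T) ∧
      (∀ t ∈ Icc (0 : ℝ) T, IsUnit (A t)) ∧
      ∀ t ∈ Icc (0 : ℝ) T, A t *ᵥ (x 0).ofLp = (x (min t (k * h))).ofLp := by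
    intro k
    induction k with
    | zero =>
      refine ⟨fun _ => 1, continuousOn_const, fun _ _ => isUnit_one, fun t ht => ?_⟩
      simp [min_eq_right ht.1]
    | succ k ih =>
      obtain ⟨A, hA, hAu, hAx⟩ := ih
      refine ⟨fun t => transfer (x (min t (k * h))).ofLp (x (min t ((k + 1 : ℕ) * h))).ofLp * A t,
        (continuousOn_transfer (hcont k) (hcont (k + 1)) fun t ht => hne _ (hmem k t ht)).mul hA,
        fun t ht => (isUnit_transfer ?_).mul (hAu t ht), fun t ht => ?_⟩
      · refine hstep _ (hmem k t ht) _ (hmem (k + 1) t ht) ?_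
        refine (abs_min_sub_min_le_max _ _ _ _).trans ?_
        have : (k : ℝ) * h - (k + 1 : ℕ) * h = -h := by
          push_cast
          ring
        rw [this, sub_self, abs_zero, abs_neg, abs_of_pos hh, max_eq_right hh.le]
      · rw [← Matrix.mulVec_mulVec, hAx t ht, transfer_mulVec (hne _ (hmem k t ht))]
  obtain ⟨N, hN⟩ := exists_nat_ge (T / h)
  obtain ⟨A, hA, hAu, hAx⟩ := key N
  refine ⟨A, hA, hAu, fun t ht => ?_⟩
  rw [hAx t ht, min_eq_left (ht.2.trans ((div_le_iff₀ hh).1 hN))]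

end Lifting

/-- (Theorem `exists in GL(n)`.) If the two trajectories never vanish on
`[0,T]`, there is a continuous family `K₀(t)` of invertible `n×n` matrices with
`K₀(t)·x(t,x₀) = y(t,y₀)` on `[0,T]`; in particular `K₀(0)x₀ = y₀` and `J₁[K₀] = 0`. -/
theorem statement4
    (n : ℕ) (T : ℝ) (hT : 0 < T)
    (f g : ℝ → EuclideanSpace ℝ (Fin n) → EuclideanSpace ℝ (Fin n))
    (hft : ∀ z, Continuous fun t => f t z) (hfx : ∀ t, LocallyLipschitz (f t))
    (hgt : ∀ z, Continuous fun t => g t z) (hgx : ∀ t, LocallyLipschitz (g t))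
    (x₀ y₀ : EuclideanSpace ℝ (Fin n))
    (x y : ℝ → EuclideanSpace ℝ (Fin n))
    (hx0 : x 0 = x₀) (hy0 : y 0 = y₀)
    (hx : ∀ t ∈ Set.Icc (0:ℝ) T, HasDerivAt x (f t (x t)) t)
    (hy : ∀ t ∈ Set.Icc (0:ℝ) T, HasDerivAt y (g t (y t)) t)
    (hxne : ∀ t ∈ Set.Icc (0:ℝ) T, x t ≠ 0)
    (hyne : ∀ t ∈ Set.Icc (0:ℝ) T, y t ≠ 0) :
    ∃ K₀ : ℝ → Matrix (Fin n) (Fin n) ℝ,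
      ContinuousOn K₀ (Set.Icc 0 T) ∧
      (∀ t ∈ Set.Icc (0:ℝ) T, IsUnit (K₀ t)) ∧
      (∀ t ∈ Set.Icc (0:ℝ) T, Matrix.toEuclideanLin (K₀ t) (x t) = y t) ∧
      Matrix.toEuclideanLin (K₀ 0) x₀ = y₀ ∧
      (1 / T) * ∫ t in (0:ℝ)..T, ‖Matrix.toEuclideanLin (K₀ t) (x t) - y t‖ ^ 2 = 0 := by
  have hxc : ContinuousOn x (Icc 0 T) := fun t ht => (hx t ht).continuousAt.continuousWithinAt
  have hyc : ContinuousOn y (Icc 0 T) := fun t ht => (hy t ht).continuousAt.continuousWithinAt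
  have h0 : (0 : ℝ) ∈ Icc (0 : ℝ) T := ⟨le_rfl, hT.le⟩
  obtain ⟨A, hA, hAu, hAx⟩ := exists_lift hT hxc hxne
  obtain ⟨B, hB, hBu, hBy⟩ := exists_lift hT hyc hyne
  obtain ⟨M, hMu, hM⟩ := exists_isUnit_mulVec_eq (a := (x 0).ofLp) (b := (y 0).ofLp)
    (by simpa using hxne 0 h0) (by simpa using hyne 0 h0)
  have hdet : ∀ t ∈ Icc (0 : ℝ) T, IsUnit (A t).det := fun t ht =>
    (Matrix.isUnit_iff_isUnit_det _).1 (hAu t ht)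
  have hAinv : ContinuousOn (fun t => (A t)⁻¹) (Icc 0 T) := by
    simp only [Matrix.inv_def, Ring.inverse_eq_inv']
    refine ContinuousOn.smul (ContinuousOn.inv₀ ?_ fun t ht => (hdet t ht).ne_zero) ?_
    · exact (continuous_id.matrix_det).comp_continuousOn hA
    · exact (continuous_id.matrix_adjugate).comp_continuousOn hA
  have hK : ∀ t ∈ Icc (0 : ℝ) T,
      Matrix.toEuclideanLin (B t * M * (A t)⁻¹) (x t) = y t := by
    intro t ht
    have hinv : (A t)⁻¹ *ᵥ (x t).ofLp = (x 0).ofLp := by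
      rw [← hAx t ht, Matrix.mulVec_mulVec, Matrix.nonsing_inv_mul _ (hdet t ht),
        Matrix.one_mulVec]
    rw [Matrix.toLpLin_apply, ← Matrix.mulVec_mulVec, ← Matrix.mulVec_mulVec, hinv, hM,
      hBy t ht]
  refine ⟨fun t => B t * M * (A t)⁻¹, (hB.mul continuousOn_const).mul hAinv, fun t ht =>
    ((hBu t ht).mul hMu).mul ((Matrix.isUnit_nonsing_inv_iff).2 (hAu t ht)), hK, ?_, ?_⟩
  · rw [← hx0, ← hy0]
    exact hK 0 h0
  · rw [intervalIntegral.integral_congr (g := fun _ => (0 : ℝ))]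
    · simp
    · intro t ht
      rw [uIcc_of_le hT.le] at ht
      simp only [hK t ht, sub_self, norm_zero]
      norm_num
end

section
/- Assume additionally that g is globally Lipschitz in the space variable, uniformly in t, so that the solution map y₀ ↦ y(·,y₀) is continuous from Γ_{y₀} into C([0,T];ℝⁿ). Then the cost functional J is continuous on (Ω,d): if K_m → K uniformly on Γ_{x₀} with K_m, K ∈ Ω, then J[K_m] → J[K]; in particular J is lower semicontinuous on (Ω,d). -/
/-!
The integrand defining `J K` is jointly continuous in `(K, t)`, so `J` is continuous on the whole
space of bounded continuous maps, not only on `Ω`. Joint continuity rests on two facts: evaluation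
`(K, p) ↦ K p` is jointly continuous for the sup distance, and by Grönwall's inequality the flow
`(t, z) ↦ y t z` is Lipschitz in `z` with constant `exp (L T)` uniformly in `t ∈ [0, T]`
(`lipschitzWith_flow`), which together with continuity in `t` gives joint continuity
(`continuous_flow`). Outside `[0, T]` the time variable is frozen by `projIcc`.
-/

open MeasureTheory Set Filter BoundedContinuousFunction

/-- Grönwall's inequality for the solution map at a fixed time. -/
theorem lipschitzWith_flow {E : Type*} [NormedAddCommGroup E] [NormedSpace ℝ E]
    {T : ℝ} {g : ℝ → E → E} {L : NNReal} (hg : ∀ t ∈ Icc (0:ℝ) T, LipschitzWith L (g t))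
    {y : ℝ → E → E} (hy0 : ∀ z, y 0 z = z)
    (hy : ∀ z, ∀ t ∈ Icc (0:ℝ) T, HasDerivAt (fun s => y s z) (g t (y t z)) t)
    {t : ℝ} (ht : t ∈ Icc (0:ℝ) T) :
    LipschitzWith (Real.toNNReal (Real.exp (L * T))) (y t) := by
  refine LipschitzWith.of_dist_le_mul fun z w => ?_
  have h := dist_le_of_trajectories_ODE_of_mem (v := g) (K := L) (s := fun _ => univ)
    (f := fun s => y s z) (g := fun s => y s w) (a := 0) (b := T) (δ := dist z w)
    (fun s hs => (hg s (Ico_subset_Icc_self hs)).lipschitzOnWith)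
    (fun s hs => (hy z s hs).continuousAt.continuousWithinAt)
    (fun s hs => (hy z s (Ico_subset_Icc_self hs)).hasDerivWithinAt) (fun _ _ => mem_univ _)
    (fun s hs => (hy w s hs).continuousAt.continuousWithinAt)
    (fun s hs => (hy w s (Ico_subset_Icc_self hs)).hasDerivWithinAt) (fun _ _ => mem_univ _)
    (by simp [hy0]) t ht
  rw [Real.coe_toNNReal _ (Real.exp_pos _).le, mul_comm]
  refine h.trans ?_
  have := ht.2
  gcongr
  linarith

theorem continuous_flow {E : Type*} [NormedAddCommGroup E] [NormedSpace ℝ E]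
    {T : ℝ} (hT : 0 ≤ T) {g : ℝ → E → E} {L : NNReal}
    (hg : ∀ t ∈ Icc (0:ℝ) T, LipschitzWith L (g t))
    {y : ℝ → E → E} (hy0 : ∀ z, y 0 z = z)
    (hy : ∀ z, ∀ t ∈ Icc (0:ℝ) T, HasDerivAt (fun s => y s z) (g t (y t z)) t) :
    Continuous fun q : ℝ × E => y (projIcc 0 T hT q.1) q.2 := by
  refine continuous_prod_of_continuous_lipschitzWith' _ (Real.toNNReal (Real.exp (L * T)))
    (fun t => lipschitzWith_flow hg hy0 hy (projIcc 0 T hT t).2) fun z => ?_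
  have hc : ContinuousOn (fun s => y s z) (Icc 0 T) :=
    fun s hs => (hy z s hs).continuousAt.continuousWithinAt
  exact hc.comp_continuous (continuous_subtype_val.comp continuous_projIcc)
    fun t => (projIcc 0 T hT t).2

/-- If `g` is globally Lipschitz in the space variable, uniformly in
`t`, then the cost functional `J` is continuous on `(Ω,d)`: `K_m → K` uniformly on
`Γ_{x₀}` implies `J[K_m] → J[K]`; in particular `J` is lower semicontinuous on `(Ω,d)`. -/
theorem statement15
    (n : ℕ) (T : ℝ) (hT : 0 < T)
    (f g : ℝ → EuclideanSpace ℝ (Fin n) → EuclideanSpace ℝ (Fin n))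
    (hft : ∀ z, Continuous fun t => f t z) (hfx : ∀ t, LocallyLipschitz (f t))
    (hgt : ∀ z, Continuous fun t => g t z)
    -- g is globally Lipschitz in the space variable, uniformly in t
    (L : NNReal) (hgLip : ∀ t ∈ Set.Icc (0:ℝ) T, LipschitzWith L (g t))
    (x₀ y₀ : EuclideanSpace ℝ (Fin n))
    (x : ℝ → EuclideanSpace ℝ (Fin n)) (hx0 : x 0 = x₀)
    (hx : ∀ t ∈ Set.Icc (0:ℝ) T, HasDerivAt x (f t (x t)) t)
    (y : ℝ → EuclideanSpace ℝ (Fin n) → EuclideanSpace ℝ (Fin n))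
    (hy0 : ∀ z, y 0 z = z)
    (hy : ∀ z, ∀ t ∈ Set.Icc (0:ℝ) T, HasDerivAt (fun s => y s z) (g t (y t z)) t)
    (Γx Γy : Set (EuclideanSpace ℝ (Fin n)))
    (hΓx : Γx = x '' Set.Icc 0 T) (hΓy : Γy = (fun t => y t y₀) '' Set.Icc 0 T)
    (hx₀Γ : x₀ ∈ Γx)
    (Ω : Set (↥Γx →ᵇ EuclideanSpace ℝ (Fin n)))
    (hΩ : Ω = {K | ∃ e : ↥Γx ≃ₜ ↥Γy, ∀ p : ↥Γx, (e p : EuclideanSpace ℝ (Fin n)) = K p})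
    (J : (↥Γx →ᵇ EuclideanSpace ℝ (Fin n)) → ℝ)
    (hJ : ∀ K, J K = (1 / T) * ∫ t in (0:ℝ)..T,
      ‖K ⟨x (Set.projIcc 0 T hT.le t),
           by rw [hΓx]; exact Set.mem_image_of_mem x (Set.projIcc 0 T hT.le t).2⟩
        - y t (K ⟨x₀, hx₀Γ⟩)‖ ^ 2) :
    ContinuousOn J Ω ∧
    (∀ Kseq : ℕ → (↥Γx →ᵇ EuclideanSpace ℝ (Fin n)), ∀ K,
      (∀ m, Kseq m ∈ Ω) → K ∈ Ω →
      Filter.Tendsto Kseq Filter.atTop (nhds K) →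
      Filter.Tendsto (fun m => J (Kseq m)) Filter.atTop (nhds (J K))) ∧
    LowerSemicontinuousOn J Ω := by
  have hxc : Continuous fun t => x (projIcc 0 T hT.le t) :=
    ContinuousOn.comp_continuous
      (fun s hs => (hx s hs).continuousAt.continuousWithinAt : ContinuousOn x (Icc 0 T))
      (continuous_subtype_val.comp continuous_projIcc) fun t => (projIcc 0 T hT.le t).2
  have hxm : ∀ t, x (projIcc 0 T hT.le t) ∈ Γx := fun t => by
    rw [hΓx]; exact mem_image_of_mem x (projIcc 0 T hT.le t).2
  have hJ' : J = fun K => (1 / T) * ∫ t in (0:ℝ)..T,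
      ‖K ⟨x (projIcc 0 T hT.le t), hxm t⟩
        - y (projIcc 0 T hT.le t) (K ⟨x₀, hx₀Γ⟩)‖ ^ 2 := by
    funext K
    rw [hJ K]
    congr 1
    refine intervalIntegral.integral_congr fun t ht => ?_
    rw [uIcc_of_le hT.le] at ht
    simp only [projIcc_of_mem hT.le ht]
  have hev : Continuous fun q : (↥Γx →ᵇ EuclideanSpace ℝ (Fin n)) × ℝ =>
      q.1 ⟨x (projIcc 0 T hT.le q.2), hxm q.2⟩ :=
    continuous_fst.eval ((hxc.subtype_mk hxm).comp continuous_snd)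
  have hev₀ : Continuous fun q : (↥Γx →ᵇ EuclideanSpace ℝ (Fin n)) × ℝ => q.1 ⟨x₀, hx₀Γ⟩ :=
    continuous_fst.eval continuous_const
  have hflow := (continuous_flow hT.le hgLip hy0 hy).comp (continuous_snd.prodMk hev₀)
  have hJc : Continuous J := by
    rw [hJ']
    exact continuous_const.mul
      (intervalIntegral.continuous_parametric_intervalIntegral_of_continuous'
        ((hev.sub hflow).norm.pow 2) 0 T)
  exact ⟨hJc.continuousOn, fun Kseq K _ _ h => (hJc.tendsto K).comp h,
    hJc.lowerSemicontinuous.lowerSemicontinuousOn _⟩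
end
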